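/- arXiv:2311.07770 — 2 statements merged into one kernel-verified Lean document; each statement's English description precedes it below -/
import Mathlib

section
/- Let S be a nonnegative random variable with E[S²] < ∞ and fix x > 0. Define m(r) := (1 − S̃(r·x)) / ( r·S̃(r·x) ) for r > 0. Then m(r) → x·E[S] as r → 0⁺, and moreover lim_{r→0⁺} ( m(r) − x·E[S] ) / r = x²·( E[S]² − E[S²]/2 ). In other words, the mean service time under Poissonian resetting at a small rate δr satisfies m(δr) = x·E[S] + δr·x²·( E[S]² − E[S²]/2 ) + o(δr). -/
open MeasureTheory ProbabilityTheory Real Filter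

/-!
A nonnegative `X` with a finite `n`-th moment has `E[exp (t X)] = ∑ k ≤ n, tᵏ/k! E[Xᵏ] + o(tⁿ)` as
`t → 0⁻`: for `t X ≤ 0` the Lagrange remainder of `exp` carries a factor at most `1`, so the
remainder of order `n` divided by `tⁿ` is dominated by a multiple of `Xⁿ`. For `n = 2` and
`t = -r x` this says `S̃(r x) = 1 - a r + b r² + o(r²)` with `a = x E[S]` and `b = x² E[S²] / 2`.
Then `A = (1 - S̃(r x)) / r = a - b r + o(r)`, and `m = A / S̃(r x)` satisfies
`(m - a) / r = ((A - a) / r + a A) / S̃(r x) → a² - b`.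
-/

section ExpTaylor

open Asymptotics Topology
open scoped Nat

lemma taylorWithinEval_exp_uIcc_zero {x : ℝ} (hx : x ≠ 0) (n : ℕ) :
    taylorWithinEval exp n (Set.uIcc 0 x) 0 x = ∑ k ∈ Finset.range (n + 1), x ^ k / k ! := by
  rw [taylor_within_apply]
  refine Finset.sum_congr rfl fun k _ ↦ ?_
  rw [iteratedDerivWithin_eq_iteratedDeriv (uniqueDiffOn_uIcc hx.symm)
    contDiff_exp.contDiffAt Set.left_mem_uIcc, iteratedDeriv_eq_iterate, iter_deriv_exp,
    sub_zero, exp_zero, smul_eq_mul, mul_one, inv_mul_eq_div]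

lemma abs_exp_sub_sum_range_le_of_nonpos {x : ℝ} (hx : x ≤ 0) (n : ℕ) :
    |exp x - ∑ k ∈ Finset.range n, x ^ k / k !| ≤ |x| ^ n / n ! := by
  cases n with
  | zero => simpa using hx
  | succ n =>
    rcases hx.eq_or_lt with rfl | hx
    · simp [Finset.sum_range_succ']
    obtain ⟨y, hy, hrem⟩ := taylor_mean_remainder_lagrange_iteratedDeriv (n := n) hx.ne'
      (contDiff_exp.contDiffOn (s := Set.uIcc 0 x))
    have hy0 : y ≤ 0 := by
      rw [Set.uIoo_of_gt hx] at hy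
      exact hy.2.le
    rw [taylorWithinEval_exp_uIcc_zero hx.ne, iteratedDeriv_eq_iterate, iter_deriv_exp,
      sub_zero] at hrem
    rw [hrem, abs_div, abs_mul, abs_pow, abs_exp, Nat.abs_cast]
    gcongr
    exact mul_le_of_le_one_left (by positivity) (exp_le_one_iff.2 hy0)

lemma abs_exp_sub_sum_range_succ_le_of_nonpos {x : ℝ} (hx : x ≤ 0) (n : ℕ) :
    |exp x - ∑ k ∈ Finset.range (n + 1), x ^ k / k !| ≤ 2 * (|x| ^ n / n !) := by
  rw [Finset.sum_range_succ, ← sub_sub, two_mul]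
  refine (abs_sub _ _).trans (add_le_add (abs_exp_sub_sum_range_le_of_nonpos hx n) ?_)
  rw [abs_div, abs_pow, Nat.abs_cast]

lemma exp_mul_const_sub_sum_range_succ_isLittleO_pow (s : ℝ) (n : ℕ) :
    (fun t ↦ exp (t * s) - ∑ k ∈ Finset.range (n + 1), (t * s) ^ k / k !)
      =o[𝓝 0] fun t ↦ t ^ n := by
  have hlim : Tendsto (fun t : ℝ ↦ t * s) (𝓝 0) (𝓝 0) :=
    (continuous_mul_const s).tendsto' 0 0 (zero_mul s)
  have hlin : (fun t : ℝ ↦ t * s) =O[𝓝 0] fun t ↦ t := by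
    simpa only [mul_comm s] using isBigO_const_mul_self s (fun t ↦ t) _
  exact ((exp_sub_sum_range_succ_isLittleO_pow n).comp_tendsto hlim).trans_isBigO (hlin.pow n)

end ExpTaylor

section MgfTaylor

open Asymptotics Topology
open scoped Nat

variable {Ω : Type*} [MeasurableSpace Ω] {μ : Measure Ω} [IsFiniteMeasure μ] {X : Ω → ℝ}

lemma integrable_exp_mul_of_nonpos_of_nonneg {t : ℝ} (ht : t ≤ 0) (hX : AEMeasurable X μ)
    (hX0 : 0 ≤ᵐ[μ] X) : Integrable (fun ω ↦ exp (t * X ω)) μ := by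
  have hneg : ∀ᵐ ω ∂μ, (-X) ω ≤ 0 := hX0.mono fun ω hω ↦ neg_nonpos.2 hω
  simpa using integrable_exp_mul_of_le (-t) 0 (neg_nonneg.2 ht) hX.neg hneg

lemma integrable_pow_of_memLp {𝕜 : Type*} [NormedDivisionRing 𝕜] {f : Ω → 𝕜} {n k : ℕ}
    (hf : MemLp f n μ) (hk : k ≤ n) : Integrable (fun ω ↦ f ω ^ k) μ := by
  have hfk : MemLp f k μ := hf.mono_exponent (by exact_mod_cast hk)
  refine (integrable_norm_iff (hf.1.pow k)).1 ?_
  simpa only [Pi.pow_apply, norm_pow] using hfk.integrable_norm_pow'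

lemma mgf_sub_sum_range_succ_eq_integral {n : ℕ} (hX : MemLp X n μ) {t : ℝ}
    (hexp : Integrable (fun ω ↦ exp (t * X ω)) μ) :
    mgf X μ t - ∑ k ∈ Finset.range (n + 1), t ^ k / k ! * ∫ ω, X ω ^ k ∂μ
      = ∫ ω, (exp (t * X ω) - ∑ k ∈ Finset.range (n + 1), (t * X ω) ^ k / k !) ∂μ := by
  have hterm (k : ℕ) (hk : k ∈ Finset.range (n + 1)) :
      Integrable (fun ω ↦ t ^ k / k ! * X ω ^ k) μ :=
    (integrable_pow_of_memLp hX (Finset.mem_range_succ_iff.1 hk)).const_mul _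
  simp_rw [mul_pow, mul_div_right_comm]
  rw [integral_sub hexp (integrable_finsetSum _ hterm), integral_finsetSum _ hterm]
  simp_rw [integral_const_mul]
  rfl

lemma mgf_sub_sum_range_succ_isLittleO_pow {n : ℕ} (hX : MemLp X n μ) (hX0 : 0 ≤ᵐ[μ] X) :
    (fun t ↦ mgf X μ t - ∑ k ∈ Finset.range (n + 1), t ^ k / k ! * ∫ ω, X ω ^ k ∂μ)
      =o[𝓝[<] 0] fun t ↦ t ^ n := by
  have hXm : AEMeasurable X μ := hX.1.aemeasurable
  have hbound : ∀ᶠ t in 𝓝[<] 0, ∀ᵐ ω ∂μ,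
      ‖(exp (t * X ω) - ∑ k ∈ Finset.range (n + 1), (t * X ω) ^ k / k !) / t ^ n‖
        ≤ 2 * (|X ω| ^ n / n !) := by
    filter_upwards [eventually_mem_nhdsWithin] with t (ht : t < 0)
    filter_upwards [hX0] with ω hω
    rw [norm_eq_abs, abs_div, abs_pow, div_le_iff₀ (pow_pos (abs_pos.2 ht.ne) n)]
    calc |exp (t * X ω) - ∑ k ∈ Finset.range (n + 1), (t * X ω) ^ k / k !|
        ≤ 2 * (|t * X ω| ^ n / n !) :=
          abs_exp_sub_sum_range_succ_le_of_nonpos (mul_nonpos_of_nonpos_of_nonneg ht.le hω) n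
      _ = 2 * (|X ω| ^ n / n !) * |t| ^ n := by rw [abs_mul, mul_pow]; ring
  have hpointwise (ω : Ω) : Tendsto (fun t ↦
      (exp (t * X ω) - ∑ k ∈ Finset.range (n + 1), (t * X ω) ^ k / k !) / t ^ n)
      (𝓝[<] 0) (𝓝 0) :=
    ((exp_mul_const_sub_sum_range_succ_isLittleO_pow (X ω) n).mono
      nhdsWithin_le_nhds).tendsto_div_nhds_zero
  have hdom : Integrable (fun ω ↦ 2 * (|X ω| ^ n / n !)) μ :=
    (hX.integrable_norm_pow'.div_const _).const_mul 2
  have hlim := tendsto_integral_filter_of_dominated_convergence _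
    (Eventually.of_forall fun t ↦ by fun_prop) hbound hdom (Eventually.of_forall hpointwise)
  rw [integral_zero] at hlim
  refine isLittleO_of_tendsto' (eventually_mem_nhdsWithin.mono fun t ht h ↦
    absurd h (pow_ne_zero n (ne_of_lt ht))) (hlim.congr' ?_)
  filter_upwards [eventually_mem_nhdsWithin] with t ht
  rw [integral_div, mgf_sub_sum_range_succ_eq_integral hX
    (integrable_exp_mul_of_nonpos_of_nonneg (le_of_lt ht) hXm hX0)]

lemma mgf_neg_mul_sub_quadratic_isLittleO_sq {P : Measure Ω} [IsProbabilityMeasure P]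
    (hX : MemLp X 2 P) (hX0 : 0 ≤ᵐ[P] X) {x : ℝ} (hx : 0 < x) :
    (fun r ↦ mgf X P (-(r * x)) -
      (1 - (x * ∫ ω, X ω ∂P) * r + (x ^ 2 * ((∫ ω, X ω ^ 2 ∂P) / 2)) * r ^ 2))
      =o[𝓝[>] 0] fun r ↦ r ^ 2 := by
  have hneg : Tendsto (fun r ↦ -(r * x)) (𝓝[>] 0) (𝓝[<] 0) := by
    refine tendsto_nhdsWithin_iff.2 ⟨?_, ?_⟩
    · have hcont : Continuous fun r ↦ -(r * x) := by fun_prop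
      exact (hcont.tendsto' 0 0 (by simp)).mono_left nhdsWithin_le_nhds
    · exact eventually_mem_nhdsWithin.mono fun r hr ↦ neg_neg_of_pos (mul_pos hr hx)
  have hlin : (fun r ↦ -(r * x)) =O[𝓝[>] 0] fun r ↦ r := by
    simpa only [neg_mul, mul_comm x] using isBigO_const_mul_self (-x) (fun r ↦ r) _
  have hmgf := mgf_sub_sum_range_succ_isLittleO_pow (n := 2) (by exact_mod_cast hX) hX0
  refine ((hmgf.comp_tendsto hneg).congr_left fun r ↦ ?_).trans_isBigO (hlin.pow 2)
  simp only [Function.comp_apply, Finset.sum_range_succ, Finset.sum_range_zero, pow_zero,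
    pow_one, Nat.factorial, integral_const, probReal_univ, smul_eq_mul]
  push_cast
  ring

end MgfTaylor

section Quotient

open Asymptotics Topology

variable {𝕜 : Type*} [NormedField 𝕜] {l : Filter 𝕜}

lemma tendsto_of_tendsto_sub_div {f : 𝕜 → 𝕜} {c d : 𝕜} (hl : l ≤ 𝓝[≠] 0)
    (h : Tendsto (fun u ↦ (f u - c) / u) l (𝓝 d)) : Tendsto f l (𝓝 c) := by
  have hid : Tendsto id l (𝓝 0) := hl.trans nhdsWithin_le_nhds
  have hlim : Tendsto (fun u ↦ c + u * ((f u - c) / u)) l (𝓝 c) := by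
    simpa using (hid.mul h).const_add c
  refine hlim.congr' ?_
  filter_upwards [hl self_mem_nhdsWithin] with u hu
  rw [mul_div_cancel₀ _ hu, add_sub_cancel]

lemma tendsto_one_sub_div_mul_sub_div {L : 𝕜 → 𝕜} {a b : 𝕜} (hl : l ≤ 𝓝[≠] 0)
    (hL : (fun u ↦ L u - (1 - a * u + b * u ^ 2)) =o[l] fun u ↦ u ^ 2) :
    Tendsto (fun u ↦ ((1 - L u) / (u * L u) - a) / u) l (𝓝 (a ^ 2 - b)) := by
  have hne : ∀ᶠ u in l, u ≠ 0 := hl self_mem_nhdsWithin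
  have hid : Tendsto id l (𝓝 0) := hl.trans nhdsWithin_le_nhds
  have hslope : Tendsto (fun u ↦ ((1 - L u) / u - a) / u) l (𝓝 (-b)) := by
    have hlim : Tendsto (fun u ↦ -b - (L u - (1 - a * u + b * u ^ 2)) / u ^ 2) l (𝓝 (-b)) := by
      simpa using hL.tendsto_div_nhds_zero.const_sub (-b)
    refine hlim.congr' (hne.mono fun u hu ↦ ?_)
    field_simp
    ring
  have hquot : Tendsto (fun u ↦ (1 - L u) / u) l (𝓝 a) := tendsto_of_tendsto_sub_div hl hslope
  have hone : Tendsto L l (𝓝 1) := by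
    have hlim : Tendsto (fun u ↦ 1 - u * ((1 - L u) / u)) l (𝓝 1) := by
      simpa using (hid.mul hquot).const_sub 1
    refine hlim.congr' (hne.mono fun u hu ↦ ?_)
    rw [mul_div_cancel₀ _ hu, sub_sub_cancel]
  have hlim : Tendsto (fun u ↦ (((1 - L u) / u - a) / u + a * ((1 - L u) / u)) / L u) l
      (𝓝 (a ^ 2 - b)) := by
    have hval : (-b + a * a) / 1 = a ^ 2 - b := by ring
    exact hval ▸ (hslope.add (hquot.const_mul a)).div hone one_ne_zero
  refine hlim.congr' ?_
  filter_upwards [hne, hone.eventually_ne one_ne_zero] with u hu hLu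
  field_simp
  ring

end Quotient

/-- **Small-rate expansion of the mean service time, multiplicative model.**
With `m(r) = (1 − S̃(rx))/(r·S̃(rx))`, one has `m(r) → x·E[S]` as `r → 0⁺`, and
`(m(r) − x·E[S])/r → x²·(E[S]² − E[S²]/2)` as `r → 0⁺`; that is,
`m(δr) = x·E[S] + δr·x²·(E[S]² − E[S²]/2) + o(δr)`. -/
theorem multiplicative_mean_small_rate_expansion
    {Ω : Type*} [MeasurableSpace Ω] {P : Measure Ω} [IsProbabilityMeasure P]
    (S : Ω → ℝ) (hSmeas : Measurable S) (hSnn : ∀ ω, 0 ≤ S ω)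
    (hS2 : Integrable (fun ω => S ω ^ 2) P)
    (x : ℝ) (hx : 0 < x)
    (Stilde : ℝ → ℝ)
    (hSt : ∀ u : ℝ, Stilde u = ∫ ω, Real.exp (-(u * S ω)) ∂P)
    (m : ℝ → ℝ)
    (hm : ∀ r : ℝ, 0 < r → m r = (1 - Stilde (r * x)) / (r * Stilde (r * x))) :
    Tendsto m (nhdsWithin 0 (Set.Ioi 0)) (nhds (x * ∫ ω, S ω ∂P)) ∧
    Tendsto (fun r => (m r - x * ∫ ω, S ω ∂P) / r) (nhdsWithin 0 (Set.Ioi 0))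
      (nhds (x ^ 2 * ((∫ ω, S ω ∂P) ^ 2 - (∫ ω, S ω ^ 2 ∂P) / 2))) := by
  have hS : MemLp S 2 P := (memLp_two_iff_integrable_sq hSmeas.aestronglyMeasurable).2 hS2
  have hStmgf (u : ℝ) : Stilde u = mgf S P (-u) := by simp only [hSt, mgf, neg_mul]
  have hexpand := mgf_neg_mul_sub_quadratic_isLittleO_sq hS (Eventually.of_forall hSnn) hx
  simp only [← hStmgf] at hexpand
  have hlim : Tendsto (fun r ↦ (m r - x * ∫ ω, S ω ∂P) / r) (nhdsWithin 0 (Set.Ioi 0))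
      (nhds (x ^ 2 * ((∫ ω, S ω ∂P) ^ 2 - (∫ ω, S ω ^ 2 ∂P) / 2))) := by
    rw [mul_sub, ← mul_pow]
    refine (tendsto_one_sub_div_mul_sub_div (nhdsGT_le_nhdsNE 0) hexpand).congr' ?_
    filter_upwards [eventually_mem_nhdsWithin] with r hr
    rw [hm r hr]
  exact ⟨tendsto_of_tendsto_sub_div (nhdsGT_le_nhdsNE 0) hlim, hlim⟩
end

section
/- Let S be a nonnegative random variable with E[S²] < ∞ and fix x > 0. Define m(r) := ( e^{r·x} − S̃(r) ) / ( r·S̃(r) ) for r > 0. Then m(r) → x + E[S] as r → 0⁺, and moreover lim_{r→0⁺} ( m(r) − (x + E[S]) ) / r = x·E[S] + E[S]² + ( x² − E[S²] )/2. In other words, the mean service time under Poissonian resetting at a small rate δr satisfies m(δr) = x + E[S] + δr·( x·E[S] + E[S]² + (x² − E[S²])/2 ) + o(δr). -/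
open MeasureTheory ProbabilityTheory Real Filter

/-!
Both `exp (r * x)` and the Laplace transform of `S` have a second-order expansion as `r → 0⁺`, and
dividing these expansions gives the result. Since `0` may be an endpoint of the interval on which
the moment generating function of `-S` is finite, that function need not be analytic there. Its
one-sided expansion comes instead from dominated convergence: the remainder at `t * X` of the Taylor
polynomial of `exp` of degree `n`, divided by `t ^ n`, is bounded for `0 < t ≤ s` by a multiple of
`|X| ^ n * (3 + exp (s * X))`, which is integrable if `X` has an `n`-th moment and `exp (c * X)` is
integrable for some `c > s`.
-/

open Finset (range)
open scoped Nat Topology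

lemma abs_exp_sub_sum_range_le (n : ℕ) (y : ℝ) :
    |exp y - ∑ k ∈ range n, y ^ k / k !| ≤ |y| ^ n / n ! * max 1 (exp y) := by
  rcases eq_or_ne 0 y with rfl | hy
  · cases n <;> simp [Finset.sum_range_succ']
  cases n with
  | zero => simp
  | succ n =>
    obtain ⟨ξ, hξ, hremainder⟩ := taylor_mean_remainder_lagrange_iteratedDeriv (n := n) hy
      contDiff_exp.contDiffOn
    have hderiv (k : ℕ) : iteratedDerivWithin k exp (Set.uIcc 0 y) 0 = 1 := by
      rw [iteratedDerivWithin_eq_iteratedDeriv (uniqueDiffOn_uIcc hy) contDiff_exp.contDiffAt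
        Set.left_mem_uIcc, iteratedDeriv_eq_iterate, iter_deriv_exp, exp_zero]
    have htaylor : taylorWithinEval exp n (Set.uIcc 0 y) 0 y
        = ∑ k ∈ range (n + 1), y ^ k / k ! := by
      simp only [taylor_within_apply, hderiv, sub_zero, smul_eq_mul, mul_one, div_eq_inv_mul]
    have hexp : exp ξ ≤ max 1 (exp y) := by
      rw [← exp_zero, ← exp_monotone.map_max]
      exact exp_le_exp.2 hξ.2.le
    rw [← htaylor, hremainder, iteratedDeriv_eq_iterate, iter_deriv_exp, sub_zero, mul_div_assoc,
      abs_mul, abs_exp, abs_div, abs_pow, Nat.abs_cast, mul_comm]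
    gcongr

lemma abs_exp_sub_sum_range_succ_le (n : ℕ) (y : ℝ) :
    |exp y - ∑ k ∈ range (n + 1), y ^ k / k !| ≤ |y| ^ n / n ! * (2 + exp y) :=
  calc
    |exp y - ∑ k ∈ range (n + 1), y ^ k / k !|
      = |(exp y - ∑ k ∈ range n, y ^ k / k !) - y ^ n / n !| := by
        rw [Finset.sum_range_succ, sub_add_eq_sub_sub]
    _ ≤ |exp y - ∑ k ∈ range n, y ^ k / k !| + |y| ^ n / n ! := by
        simpa only [abs_div, abs_pow, Nat.abs_cast] using abs_sub _ (y ^ n / n ! : ℝ)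
    _ ≤ |y| ^ n / n ! * (1 + exp y) + |y| ^ n / n ! := by
        grw [abs_exp_sub_sum_range_le, max_le_add_of_nonneg zero_le_one (exp_nonneg y)]
    _ = |y| ^ n / n ! * (2 + exp y) := by ring

lemma exp_mul_sub_sum_range_succ_isLittleO_pow (n : ℕ) (a : ℝ) :
    (fun t ↦ exp (t * a) - ∑ k ∈ range (n + 1), (t * a) ^ k / k !) =o[𝓝 0] (fun t ↦ t ^ n) := by
  have hlim : Tendsto (fun t ↦ t * a) (𝓝 0) (𝓝 0) := by
    simpa only [id, zero_mul] using (tendsto_id (x := 𝓝 (0 : ℝ))).mul_const a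
  refine ((exp_sub_sum_range_succ_isLittleO_pow n).comp_tendsto hlim).trans_isBigO ?_
  simpa only [Function.comp_def, mul_pow, mul_comm] using
    Asymptotics.isBigO_const_mul_self (a ^ n) (fun t ↦ t ^ n) (𝓝 0)

lemma exp_mul_sub_quadratic_isLittleO_sq (x : ℝ) :
    (fun r ↦ exp (r * x) - (1 + x * r + x ^ 2 / 2 * r ^ 2)) =o[𝓝 0] (fun r ↦ r ^ 2) :=
  (exp_mul_sub_sum_range_succ_isLittleO_pow 2 x).congr_left fun r ↦ by
    simp [Finset.sum_range_succ, mul_comm r x, mul_pow, mul_div_right_comm]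

lemma exp_mul_le_one_add_exp_mul {s t : ℝ} (ht : 0 ≤ t) (hts : t ≤ s) (a : ℝ) :
    exp (t * a) ≤ 1 + exp (s * a) := by
  rcases le_total a 0 with ha | ha
  · have : exp (t * a) ≤ 1 := exp_le_one_iff.2 (mul_nonpos_of_nonneg_of_nonpos ht ha)
    linarith [exp_nonneg (s * a)]
  · have : exp (t * a) ≤ exp (s * a) := by gcongr
    linarith

lemma abs_exp_mul_sub_sum_range_succ_div_pow_le (n : ℕ) {s t : ℝ} (ht : 0 < t) (hts : t ≤ s)
    (a : ℝ) :
    |(exp (t * a) - ∑ k ∈ range (n + 1), (t * a) ^ k / k !) / t ^ n|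
      ≤ |a| ^ n / n ! * (3 + exp (s * a)) := by
  rw [abs_div, abs_of_pos (pow_pos ht n), div_le_iff₀ (pow_pos ht n)]
  calc |exp (t * a) - ∑ k ∈ range (n + 1), (t * a) ^ k / k !|
    _ ≤ |t * a| ^ n / n ! * (2 + exp (t * a)) := abs_exp_sub_sum_range_succ_le n _
    _ ≤ |t * a| ^ n / n ! * (2 + (1 + exp (s * a))) := by
      grw [exp_mul_le_one_add_exp_mul ht.le hts]
    _ = |a| ^ n / n ! * (3 + exp (s * a)) * t ^ n := by
      rw [abs_mul, abs_of_pos ht]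
      ring

section Mgf

variable {Ω : Type*} [MeasurableSpace Ω] {μ : Measure Ω} [IsFiniteMeasure μ] {X : Ω → ℝ} {c : ℝ}

lemma integrable_pow_abs_mul_exp_of_pos_of_lt {s : ℝ} (hs : 0 < s) (hsc : s < c)
    (hexp : Integrable (fun ω ↦ exp (c * X ω)) μ) (n : ℕ) :
    Integrable (fun ω ↦ |X ω| ^ n * exp (s * X ω)) μ := by
  have hIcc : Set.Icc 0 c ⊆ integrableExpSet X μ := fun t ht ↦
    integrable_exp_mul_of_nonneg_of_le hexp ht.1 ht.2
  exact integrable_pow_abs_mul_exp_of_mem_interior_integrableExpSet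
    (interior_mono hIcc (interior_Icc (a := (0 : ℝ)) ▸ ⟨hs, hsc⟩)) n

lemma integral_exp_mul_sub_sum_range_succ {n : ℕ} {t : ℝ} (hX : MemLp X n μ)
    (hexp : Integrable (fun ω ↦ exp (t * X ω)) μ) :
    ∫ ω, (exp (t * X ω) - ∑ k ∈ range (n + 1), (t * X ω) ^ k / k !) ∂μ
      = mgf X μ t - ∑ k ∈ range (n + 1), moment X k μ * t ^ k / k ! := by
  have hpow {k : ℕ} (hk : k ∈ range (n + 1)) : Integrable (fun ω ↦ (t * X ω) ^ k / k !) μ := by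
    have hXk : MemLp X k μ := hX.mono_exponent (mod_cast Finset.mem_range_succ_iff.1 hk)
    have hint : Integrable (fun ω ↦ X ω ^ k) μ :=
      hXk.integrable_norm_pow'.mono (by have := hX.1; fun_prop) (by simp)
    simpa only [mul_pow] using (hint.const_mul (t ^ k)).div_const (k ! : ℝ)
  rw [integral_sub hexp (integrable_finsetSum _ fun k ↦ hpow), integral_finsetSum _ fun k ↦ hpow]
  simp only [mul_pow, integral_div, integral_const_mul, mgf, moment, Pi.pow_apply, mul_comm]

theorem mgf_sub_sum_moment_isLittleO_pow {n : ℕ} (hX : MemLp X n μ) (hc : 0 < c)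
    (hexp : Integrable (fun ω ↦ exp (c * X ω)) μ) :
    (fun t ↦ mgf X μ t - ∑ k ∈ range (n + 1), moment X k μ * t ^ k / k !)
      =o[𝓝[>] 0] (fun t ↦ t ^ n) := by
  let R (y : ℝ) : ℝ := exp y - ∑ k ∈ range (n + 1), y ^ k / (k !)
  have hsmall : ∀ᶠ t in 𝓝[>] (0 : ℝ), t ∈ Set.Ioo 0 (c / 2) := Ioo_mem_nhdsGT (half_pos hc)
  have hdom : Integrable (fun ω ↦ |X ω| ^ n / n ! * (3 + exp (c / 2 * X ω))) μ := by
    have hpow : Integrable (fun ω ↦ |X ω| ^ n) μ := hX.integrable_norm_pow'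
    have hpowexp := integrable_pow_abs_mul_exp_of_pos_of_lt (half_pos hc) (half_lt_self hc) hexp n
    refine (((hpow.const_mul 3).add hpowexp).div_const (n ! : ℝ)).congr (ae_of_all _ fun ω ↦ ?_)
    simp only [Pi.add_apply]
    ring
  have hbound : ∀ᶠ t in 𝓝[>] 0, ∀ᵐ ω ∂μ,
      ‖R (t * X ω) / t ^ n‖ ≤ |X ω| ^ n / n ! * (3 + exp (c / 2 * X ω)) :=
    hsmall.mono fun t ht ↦ ae_of_all _ fun ω ↦
      abs_exp_mul_sub_sum_range_succ_div_pow_le n ht.1 ht.2.le (X ω)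
  have hpointwise (ω : Ω) : Tendsto (fun t ↦ R (t * X ω) / t ^ n) (𝓝[>] 0) (𝓝 0) :=
    ((exp_mul_sub_sum_range_succ_isLittleO_pow n (X ω)).mono
      nhdsWithin_le_nhds).tendsto_div_nhds_zero
  have hlim : Tendsto (fun t ↦ ∫ ω, R (t * X ω) / t ^ n ∂μ) (𝓝[>] 0) (𝓝 (∫ _, 0 ∂μ)) := by
    refine tendsto_integral_filter_of_dominated_convergence _ ?_ hbound hdom
      (ae_of_all _ hpointwise)
    have := hX.1
    exact .of_forall fun t ↦ by fun_prop
  have hne : ∀ᶠ t : ℝ in 𝓝[>] 0, t ^ n ≠ 0 :=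
    hsmall.mono fun t ht ↦ pow_ne_zero n ht.1.ne'
  rw [integral_zero] at hlim
  rw [Asymptotics.isLittleO_iff_tendsto' (hne.mono fun t ht h ↦ absurd h ht)]
  refine hlim.congr' ?_
  filter_upwards [hsmall] with t ⟨ht, htc⟩
  rw [integral_div, integral_exp_mul_sub_sum_range_succ hX
    (integrable_exp_mul_of_nonneg_of_le hexp ht.le (by linarith))]

end Mgf

section SecondOrder

variable {𝕜 : Type*} [NormedField 𝕜]

lemma tendsto_of_tendsto_sub_div_s17 {α : Type*} {l : Filter α} {f g : α → 𝕜} {c d : 𝕜}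
    (hg : Tendsto g l (𝓝 0)) (hg_ne : ∀ᶠ a in l, g a ≠ 0)
    (h : Tendsto (fun a ↦ (f a - c) / g a) l (𝓝 d)) : Tendsto f l (𝓝 c) := by
  have hlim : Tendsto (fun a ↦ c + g a * ((f a - c) / g a)) l (𝓝 c) := by
    simpa only [zero_mul, add_zero] using (hg.mul h).const_add c
  refine hlim.congr' (hg_ne.mono fun a ha ↦ ?_)
  rw [mul_div_cancel₀ _ ha, add_sub_cancel]

lemma tendsto_sub_div_mul_sub_div_of_isLittleO {l : Filter 𝕜} (hl : l ≤ 𝓝[≠] 0) {A B : 𝕜 → 𝕜}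
    {a₁ a₂ b₁ b₂ : 𝕜}
    (hA : (fun r ↦ A r - (1 + a₁ * r + a₂ * r ^ 2)) =o[l] (fun r ↦ r ^ 2))
    (hB : (fun r ↦ B r - (1 + b₁ * r + b₂ * r ^ 2)) =o[l] (fun r ↦ r ^ 2)) :
    Tendsto (fun r ↦ ((A r - B r) / (r * B r) - (a₁ - b₁)) / r) l
      (𝓝 (a₂ - b₂ - b₁ * (a₁ - b₁))) := by
  have hid : Tendsto (fun r : 𝕜 ↦ r) l (𝓝 0) := hl.trans nhdsWithin_le_nhds
  have hne : ∀ᶠ r in l, r ≠ 0 := hl self_mem_nhdsWithin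
  have hB_one : Tendsto B l (𝓝 1) := by
    have hrem := hB.trans_tendsto (by simpa using hid.pow 2)
    have hpoly := ((hid.const_mul b₁).const_add 1).add ((hid.pow 2).const_mul b₂)
    simpa using hrem.add hpoly
  set α : 𝕜 → 𝕜 := fun r ↦ (A r - (1 + a₁ * r + a₂ * r ^ 2)) / r ^ 2 with hα
  set β : 𝕜 → 𝕜 := fun r ↦ (B r - (1 + b₁ * r + b₂ * r ^ 2)) / r ^ 2 with hβ
  have hα_zero : Tendsto α l (𝓝 0) := hA.tendsto_div_nhds_zero
  have hβ_zero : Tendsto β l (𝓝 0) := hB.tendsto_div_nhds_zero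
  -- The numerator is `(A r - B r - (a₁ - b₁) * r * B r) / r ^ 2` after expanding `A` and `B`.
  have hlim : Tendsto (fun r ↦ (α r - (1 + (a₁ - b₁) * r) * β r
      + (a₂ - b₂ - (a₁ - b₁) * (b₁ + b₂ * r))) / B r) l (𝓝 (a₂ - b₂ - b₁ * (a₁ - b₁))) := by
    have hβ_coeff := (hid.const_mul (a₁ - b₁)).const_add 1
    have hpoly := (((hid.const_mul b₂).const_add b₁).const_mul (a₁ - b₁)).const_sub (a₂ - b₂)
    have hnum := (hα_zero.sub (hβ_coeff.mul hβ_zero)).add hpoly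
    simpa [Pi.div_def, mul_comm] using hnum.div hB_one one_ne_zero
  refine hlim.congr' ?_
  filter_upwards [hne, hB_one.eventually_ne one_ne_zero] with r hr hBr
  simp only [hα, hβ]
  field_simp
  ring

end SecondOrder

section MeanServiceTime

variable {Ω : Type*} [MeasurableSpace Ω] {P : Measure Ω} [IsProbabilityMeasure P]

lemma mgf_sub_quadratic_isLittleO_sq {X : Ω → ℝ} {c : ℝ} (hX : MemLp X 2 P) (hc : 0 < c)
    (hexp : Integrable (fun ω ↦ exp (c * X ω)) P) :
    (fun t ↦ mgf X P t - (1 + P[X] * t + P[X ^ 2] / 2 * t ^ 2))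
      =o[𝓝[>] 0] (fun t ↦ t ^ 2) :=
  (mgf_sub_sum_moment_isLittleO_pow hX hc hexp).congr_left fun t ↦ by
    simp [Finset.sum_range_succ, moment, mul_div_right_comm]

theorem additive_mean_small_rate_expansion_general
    {S : Ω → ℝ} (hS2 : Integrable (fun ω ↦ S ω ^ 2) P)
    {c : ℝ} (hc : 0 < c) (hexp : Integrable (fun ω ↦ exp (-(c * S ω))) P) (x : ℝ)
    {Stilde : ℝ → ℝ} (hSt : ∀ u : ℝ, Stilde u = ∫ ω, exp (-(u * S ω)) ∂P) {m : ℝ → ℝ}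
    (hm : ∀ r : ℝ, 0 < r → m r = (exp (r * x) - Stilde r) / (r * Stilde r)) :
    Tendsto m (𝓝[>] 0) (𝓝 (x + ∫ ω, S ω ∂P)) ∧
    Tendsto (fun r ↦ (m r - (x + ∫ ω, S ω ∂P)) / r) (𝓝[>] 0)
      (𝓝 (x * (∫ ω, S ω ∂P) + (∫ ω, S ω ∂P) ^ 2 + (x ^ 2 - ∫ ω, S ω ^ 2 ∂P) / 2)) := by
  have hmgf : Stilde = mgf (-S) P := by
    ext u
    simp [hSt, mgf]
  have hexp' : Integrable (fun ω ↦ exp (c * (-S) ω)) P := by simpa using hexp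
  have hmeas : AEMeasurable (-S) P :=
    aemeasurable_of_integrable_exp_mul hc.ne (by simp) hexp'
  have hLp : MemLp (-S) 2 P :=
    (memLp_two_iff_integrable_sq hmeas.aestronglyMeasurable).2 (by simpa using hS2)
  have hratio := tendsto_sub_div_mul_sub_div_of_isLittleO (nhdsGT_le_nhdsNE 0)
    ((exp_mul_sub_quadratic_isLittleO_sq x).mono nhdsWithin_le_nhds)
    (mgf_sub_quadratic_isLittleO_sq hLp hc hexp')
  have hslope : Tendsto (fun r ↦ (m r - (x + ∫ ω, S ω ∂P)) / r) (𝓝[>] 0)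
      (𝓝 (x * (∫ ω, S ω ∂P) + (∫ ω, S ω ∂P) ^ 2 + (x ^ 2 - ∫ ω, S ω ^ 2 ∂P) / 2)) := by
    convert hratio.congr' ?_ using 2
    · simp only [Pi.pow_apply, Pi.neg_apply, neg_sq, integral_neg]
      ring
    · filter_upwards [self_mem_nhdsWithin] with r hr
      simp [hm r hr, hmgf, integral_neg]
  exact ⟨tendsto_of_tendsto_sub_div_s17 nhdsWithin_le_nhds
    (eventually_mem_nhdsWithin.mono fun r hr ↦ ne_of_gt hr) hslope, hslope⟩

end MeanServiceTime

/-- **Small-rate expansion of the mean service time, additive model.**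
With `m(r) = (e^{rx} − S̃(r))/(r·S̃(r))`, one has `m(r) → x + E[S]` as `r → 0⁺`, and
`(m(r) − (x + E[S]))/r → x·E[S] + E[S]² + (x² − E[S²])/2` as `r → 0⁺`; that is,
`m(δr) = x + E[S] + δr·(x·E[S] + E[S]² + (x² − E[S²])/2) + o(δr)`. -/
theorem additive_mean_small_rate_expansion
    {Ω : Type*} [MeasurableSpace Ω] {P : Measure Ω} [IsProbabilityMeasure P]
    (S : Ω → ℝ) (hSmeas : Measurable S) (hSnn : ∀ ω, 0 ≤ S ω)
    (hS2 : Integrable (fun ω => S ω ^ 2) P)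
    (x : ℝ) (hx : 0 < x)
    (Stilde : ℝ → ℝ)
    (hSt : ∀ u : ℝ, Stilde u = ∫ ω, Real.exp (-(u * S ω)) ∂P)
    (m : ℝ → ℝ)
    (hm : ∀ r : ℝ, 0 < r → m r = (Real.exp (r * x) - Stilde r) / (r * Stilde r)) :
    Tendsto m (nhdsWithin 0 (Set.Ioi 0)) (nhds (x + ∫ ω, S ω ∂P)) ∧
    Tendsto (fun r => (m r - (x + ∫ ω, S ω ∂P)) / r) (nhdsWithin 0 (Set.Ioi 0))
      (nhds (x * (∫ ω, S ω ∂P) + (∫ ω, S ω ∂P) ^ 2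
        + (x ^ 2 - ∫ ω, S ω ^ 2 ∂P) / 2)) := by
  have hexp : Integrable (fun ω ↦ Real.exp (-(1 * S ω))) P := by
    simpa only [Pi.neg_apply, mul_neg] using integrable_exp_mul_of_le 1 0 zero_le_one
      hSmeas.neg.aemeasurable (ae_of_all P fun ω ↦ neg_nonpos.2 (hSnn ω))
  exact additive_mean_small_rate_expansion_general hS2 one_pos hexp x hSt hm
end
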